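/- Let r ≥ 3 be an odd integer with gcd(r,3)=1, n = 3r, and let d = 3^r + 2 or d = 3^{2r} + 2. As z ranges over GF(3^n), the Weil sum S_d(z) takes the value 0 exactly 2·3^{3r-1} + 3^{2r-1} - 3^r times, the value 3^{2r} exactly 3^r times, the value 3^{(3r+1)/2} exactly (3^{3r-1}-3^{2r-1})/2 times, and the value -3^{(3r+1)/2} exactly (3^{3r-1}-3^{2r-1})/2 times. -/

import Mathlib

noncomputable instance (p n : ℕ) [Fact p.Prime] : Fintype (GaloisField p n) :=
  Fintype.ofFinite _

/-- The Weil sum `S_d(z) = ∑_{x ∈ GF(3^n)} ω^{Tr(zx - x^d)}`, where `ω = e^{2πi/3}`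
and `Tr` is the absolute trace from `GF(3^n)` to `GF(3)`. -/
noncomputable def ternaryWeilSum (n d : ℕ) (z : GaloisField 3 n) : ℂ :=
  ∑ x : GaloisField 3 n,
    Complex.exp (2 * Real.pi * Complex.I / 3) ^
      (Algebra.trace (ZMod 3) (GaloisField 3 n) (z * x - x ^ d)).val

/-!
Let `K = GF(3^r)` have `q` elements and let `F = GF(3^(3r))`, a cyclic cubic extension of `K`. Since
`x ^ d = x ^ 2 * σ x` for a generator `σ` of `Gal(F/K)`, the sum `S_d(z)` is
`∑ x, χ (Tr (z x - x² σ(x)))`, with `Tr` the trace from `F` to `K` and `χ` the canonical additive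
character of `K`.

Choose an Artin–Schreier generator `t`, so that `σ t = t + 1`, and write `x = u + v t - w t²` with
`u, v, w ∈ K`; then `Tr x = w`. The trace in the exponent is linear in `u`, so the sum over `u`
vanishes unless `w²` is the last coordinate `z₂` of `z`. The only cubic term in `v` is `v³`, and
`χ (v³) = χ v`, so what remains is a sum over `v` of `χ` at a polynomial of degree at most two. For
`z₂ = 0` this polynomial is linear, and `S_d(z)` is `q²` for exactly `q` such `z` and `0` for the
others. For `z₂` a nonzero square, the Gauss sums for the two roots `w` differ by a cube root of
unity and, `-1` being a non-square, a sign, so that `S_d(z)` is `0` or has square `3 q³`. The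
moments of `S_d` of order zero, one and two determine the remaining multiplicities.
-/

open Finset

section WalshTransform

variable {A R : Type*} [CommRing A] [Fintype A] [CommRing R]

/-- The Walsh transform of `g` with respect to an additive character `ψ`, with the sign convention
`z ↦ ∑ x, ψ (z x - g x)` of cross-correlation sums. -/
def walshTransform (ψ : AddChar A R) (g : A → A) (z : A) : R :=
  ∑ x, ψ (z * x - g x)

variable [IsDomain R] {ψ : AddChar A R}

theorem sum_walshTransform (hψ : ψ.IsPrimitive) (g : A → A) :
    ∑ z, walshTransform ψ g z = Fintype.card A * ψ (-g 0) := by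
  classical
  simp_rw [walshTransform, sub_eq_add_neg, AddChar.map_add_eq_mul]
  rw [sum_comm]
  simp [← sum_mul, AddChar.sum_mulShift _ hψ]

theorem sum_walshTransform_sq (hψ : ψ.IsPrimitive) (g : A → A) :
    ∑ z, walshTransform ψ g z ^ 2 = Fintype.card A * ∑ x, ψ (-(g x + g (-x))) := by
  classical
  have expand (z : A) : walshTransform ψ g z ^ 2 =
      ∑ x, ∑ y, ψ (z * (x + y)) * ψ (-(g x + g y)) := by
    rw [walshTransform, sq, sum_mul_sum]
    refine sum_congr rfl fun x _ ↦ sum_congr rfl fun y _ ↦ ?_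
    rw [← AddChar.map_add_eq_mul, ← AddChar.map_add_eq_mul]
    congr 1
    ring
  simp_rw [expand]
  rw [sum_comm, mul_sum]
  refine sum_congr rfl fun x _ ↦ ?_
  rw [sum_comm]
  simp_rw [← sum_mul, AddChar.sum_mulShift _ hψ]
  simp [add_eq_zero_iff_neg_eq]

theorem sum_walshTransform_sq_of_odd (hψ : ψ.IsPrimitive) {g : A → A}
    (hg : ∀ x, g (-x) = -g x) :
    ∑ z, walshTransform ψ g z ^ 2 = (Fintype.card A : R) ^ 2 := by
  rw [sum_walshTransform_sq hψ]
  simp [hg, sq]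

end WalshTransform

section QuadraticSums

variable {K R : Type*} [Field K] [Fintype K] [CommRing R] {χ : AddChar K R}

theorem sum_addChar_mul_sq_eq_gaussSum [IsDomain R] [DecidableEq K] (hK : ringChar K ≠ 2)
    (hχ : χ.IsPrimitive) {a : K} (ha : a ≠ 0) :
    ∑ v, χ (a * v ^ 2) =
      gaussSum ((quadraticChar K).ringHomComp (Int.castRingHom R)) (χ.mulShift a) := by
  have card_sqrts (y : K) : (#{v : K | v ^ 2 = y} : R) = quadraticChar K y + 1 := by
    have h := congrArg (Int.cast (R := R)) (quadraticChar_card_sqrts hK y)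
    push_cast at h
    rw [← h]
    congr 2
    ext
    simp
  calc ∑ v, χ (a * v ^ 2) = ∑ y, #{v : K | v ^ 2 = y} • χ (a * y) :=
        (sum_comp (fun y ↦ χ (a * y)) (fun v : K ↦ v ^ 2)).trans <|
          sum_subset (subset_univ _) fun y _ hy ↦ by
            rw [filter_eq_empty_iff.2 fun v _ h ↦ hy (mem_image.2 ⟨v, mem_univ v, h⟩)]
            simp
    _ = ∑ y, quadraticChar K y * χ.mulShift a y + ∑ y, χ.mulShift a y := by
        simp only [nsmul_eq_mul, card_sqrts, add_mul, one_mul, sum_add_distrib,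
          AddChar.mulShift_apply]
    _ = _ := by
        rw [AddChar.sum_eq_zero_of_ne_one (hχ ha), add_zero]
        rfl

theorem sum_addChar_neg_mul_sq [IsDomain R] (hneg : ¬IsSquare (-1 : K)) (hχ : χ.IsPrimitive)
    {a : K} (ha : a ≠ 0) :
    ∑ v, χ (-a * v ^ 2) = -∑ v, χ (a * v ^ 2) := by
  classical
  have hK : ringChar K ≠ 2 := fun h ↦ hneg (FiniteField.isSquare_of_char_two h _)
  have hη : quadraticChar K (-1) = -1 := quadraticChar_neg_one_iff_not_isSquare.2 hneg
  have hshift := gaussSum_mulShift ((quadraticChar K).ringHomComp (Int.castRingHom R))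
    (χ.mulShift a) (-1)
  simp only [Units.val_neg, Units.val_one, MulChar.ringHomComp_apply, hη,
    AddChar.mulShift_mulShift] at hshift
  rw [sum_addChar_mul_sq_eq_gaussSum hK hχ ha,
    sum_addChar_mul_sq_eq_gaussSum hK hχ (neg_ne_zero.2 ha), ← hshift]
  simp

theorem sq_sum_addChar_mul_sq [IsDomain R] [CharZero R] (hneg : ¬IsSquare (-1 : K))
    (hχ : χ.IsPrimitive) {a : K} (ha : a ≠ 0) :
    (∑ v, χ (a * v ^ 2)) ^ 2 = -(Fintype.card K : R) := by
  classical
  have hK : ringChar K ≠ 2 := fun h ↦ hneg (FiniteField.isSquare_of_char_two h _)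
  have hη : quadraticChar K (-1) = -1 := quadraticChar_neg_one_iff_not_isSquare.2 hneg
  rw [sum_addChar_mul_sq_eq_gaussSum hK hχ ha,
    gaussSum_sq ((MulChar.ringHomComp_ne_one_iff (Int.castRingHom R).injective_int).2
      (quadraticChar_ne_one hK)) ((quadraticChar_isQuadratic K).comp _)
      (AddChar.IsPrimitive.of_ne_one (hχ ha))]
  simp [hη]

theorem sum_addChar_quadratic [NeZero (2 : K)] (χ : AddChar K R) {a : K} (ha : a ≠ 0) (b c : K) :
    ∑ v, χ (a * v ^ 2 + b * v + c) = χ (c - b ^ 2 / (4 * a)) * ∑ v, χ (a * v ^ 2) := by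
  have h2 : (2 : K) ≠ 0 := two_ne_zero
  have h4 : (4 : K) ≠ 0 := by
    rw [show (4 : K) = 2 * 2 by norm_num]
    exact mul_ne_zero h2 h2
  rw [← Equiv.sum_comp (Equiv.addRight (b / (2 * a))) fun v ↦ χ (a * v ^ 2), mul_sum]
  refine sum_congr rfl fun v _ ↦ ?_
  rw [← AddChar.map_add_eq_mul, Equiv.coe_addRight]
  congr 1
  field_simp
  ring

/- Completing the square turns the two sums into `ζ G` and `-ζ² G`, with `G` a quadratic Gauss sum
and `ζ³ = 1`; the sign comes from `-1` being a non-square, the factor `3` from `(ζ - ζ²)² = -3`. -/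
theorem sum_addChar_quadratic_add_sum_neg [IsDomain R] [CharZero R] [CharP K 3]
    (hneg : ¬IsSquare (-1 : K)) (hχ : χ.IsPrimitive) {a : K} (ha : a ≠ 0) (b c : K) :
    ∑ v, χ (a * v ^ 2 + b * v + c) + ∑ v, χ (-(a * v ^ 2 + b * v + c)) = 0 ∨
      (∑ v, χ (a * v ^ 2 + b * v + c) + ∑ v, χ (-(a * v ^ 2 + b * v + c))) ^ 2 =
        3 * Fintype.card K := by
  have h3 : (3 : K) = 0 := CharP.ofNat_eq_zero K 3
  have : NeZero (2 : K) := ⟨fun h ↦ one_ne_zero (α := K) (by linear_combination h3 - h)⟩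
  set e := c - b ^ 2 / (4 * a) with he
  set G := ∑ v, χ (a * v ^ 2) with hG
  have hpos : ∑ v, χ (a * v ^ 2 + b * v + c) = χ e * G := sum_addChar_quadratic χ ha b c
  have hminus : ∑ v, χ (-(a * v ^ 2 + b * v + c)) = -(χ (-e) * G) := by
    have h := sum_addChar_quadratic χ (neg_ne_zero.2 ha) (-b) (-c)
    rw [sum_addChar_neg_mul_sq hneg hχ ha] at h
    rw [he, hG, ← mul_neg]
    convert h using 3
    · ring
    · field_simp
      ring
  have hcube : χ e ^ 3 = 1 := by
    rw [← AddChar.map_nsmul_eq_pow, nsmul_eq_mul, Nat.cast_ofNat, h3, zero_mul,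
      AddChar.map_zero_eq_one]
  have hinv : χ (-e) = χ e ^ 2 := by
    rw [← AddChar.map_nsmul_eq_pow, nsmul_eq_mul]
    congr 1
    push_cast
    linear_combination -e * h3
  have hG2 : G ^ 2 = -(Fintype.card K : R) := sq_sum_addChar_mul_sq hneg hχ ha
  rw [hpos, hminus, hinv]
  generalize χ e = ζ at hcube
  have hfactor : (ζ - 1) * (ζ ^ 2 + ζ + 1) = 0 := by linear_combination hcube
  rcases mul_eq_zero.1 hfactor with h | h
  · left
    linear_combination (-ζ * G) * h
  · right
    have hdiff : (ζ - ζ ^ 2) ^ 2 = -3 := by linear_combination (ζ - 2) * hcube + h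
    linear_combination G ^ 2 * hdiff - 3 * hG2

end QuadraticSums

section CyclicExtension

variable {K F : Type*} [Field K] [Field F] [Algebra K F] [IsGalois K F] {σ : Gal(F/K)}

theorem algebraMap_trace_eq_sum_pow_apply [FiniteDimensional K F]
    (hσ : ∀ τ, τ ∈ Subgroup.zpowers σ) (x : F) :
    algebraMap K F (Algebra.trace K F x) = ∑ i ∈ range (Module.finrank K F), (σ ^ i) x := by
  classical
  have horder : orderOf σ = Module.finrank K F := by
    rw [orderOf_eq_card_of_forall_mem_zpowers hσ, IsGalois.card_aut_eq_finrank]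
  rw [trace_eq_sum_automorphisms, ← IsCyclic.image_range_orderOf hσ, sum_image, horder]
  exact fun i hi j hj h ↦ pow_injOn_Iio_orderOf (by simpa using hi) (by simpa using hj) h

theorem exists_algebraMap_eq_of_apply_eq [FiniteDimensional K F]
    (hσ : ∀ τ, τ ∈ Subgroup.zpowers σ) {x : F} (hx : σ x = x) : ∃ k : K, algebraMap K F k = x := by
  refine (IsGalois.mem_range_algebraMap_iff_fixed x).2 fun τ ↦ ?_
  obtain ⟨n, rfl⟩ := mem_powers_iff_mem_zpowers.2 (hσ τ)
  simp [AlgEquiv.coe_pow, Function.iterate_fixed hx]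

theorem mem_zpowers_of_finrank_eq_three (hdim : Module.finrank K F = 3) (hσ : σ ≠ 1)
    (τ : Gal(F/K)) : τ ∈ Subgroup.zpowers σ := by
  have : FiniteDimensional K F := Module.finite_of_finrank_pos (by omega)
  have : Fact (Nat.Prime 3) := ⟨Nat.prime_three⟩
  exact mem_zpowers_of_prime_card (by rw [IsGalois.card_aut_eq_finrank, hdim]) hσ

theorem algebraMap_trace_of_finrank_eq_three (hdim : Module.finrank K F = 3) (hσ : σ ≠ 1)
    (x : F) : algebraMap K F (Algebra.trace K F x) = x + σ x + σ (σ x) := by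
  have : FiniteDimensional K F := Module.finite_of_finrank_pos (by omega)
  rw [algebraMap_trace_eq_sum_pow_apply (mem_zpowers_of_finrank_eq_three hdim hσ), hdim]
  simp [sum_range_succ]

theorem apply_apply_apply_of_finrank_eq_three (hdim : Module.finrank K F = 3) (σ : Gal(F/K))
    (x : F) : σ (σ (σ x)) = x := by
  have : FiniteDimensional K F := Module.finite_of_finrank_pos (by omega)
  have hpow : σ ^ 3 = 1 := by rw [← hdim, ← IsGalois.card_aut_eq_finrank, pow_card_eq_one']
  exact DFunLike.congr_fun hpow x

end CyclicExtension

section CubicCoordinates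

variable {K F : Type*} [Field K] [Field F] [Algebra K F] {σ : Gal(F/K)} {t : F}

/-- The coordinate map `(u, v, w) ↦ u + v t - w t²` of the basis `1, t, -t²` of a cubic extension
of fields of characteristic `3`, for an Artin–Schreier generator `t`, that is, `σ t = t + 1`.
With this sign the last coordinate is the trace. -/
def cubicCoord (t : F) : K × K × K →ₗ[K] F where
  toFun p := algebraMap K F p.1 + p.2.1 • t - p.2.2 • t ^ 2
  map_add' p q := by
    simp only [Prod.fst_add, Prod.snd_add, map_add, add_smul]
    ring
  map_smul' c p := by
    simp only [Prod.smul_fst, Prod.smul_snd, smul_eq_mul, map_mul, RingHom.id_apply]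
    simp only [Algebra.smul_def, map_mul]
    ring

theorem cubicCoord_apply (t : F) (u v w : K) :
    cubicCoord t (u, v, w) =
      algebraMap K F u + algebraMap K F v * t - algebraMap K F w * t ^ 2 := by
  simp [cubicCoord, Algebra.smul_def]

theorem ne_one_of_apply_eq_add_one (ht : σ t = t + 1) : σ ≠ 1 := by
  rintro rfl
  simp at ht

variable [IsGalois K F] [CharP K 3] (hdim : Module.finrank K F = 3)

include hdim

theorem exists_apply_eq_add_one (hσ : σ ≠ 1) : ∃ t, σ t = t + 1 := by
  have := charP_of_injective_algebraMap (algebraMap K F).injective 3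
  have h3 : (3 : F) = 0 := CharP.ofNat_eq_zero F 3
  have : FiniteDimensional K F := Module.finite_of_finrank_pos (by omega)
  obtain ⟨y, hy⟩ := Algebra.trace_surjective K F 1
  have htrace := algebraMap_trace_of_finrank_eq_three hdim hσ y
  rw [hy, map_one] at htrace
  refine ⟨σ y - y, ?_⟩
  rw [map_sub]
  linear_combination -htrace - σ y * h3

/- In characteristic `3` the terms of degree two and three in `u` have trace zero. -/
theorem trace_mul_sub_sq_mul_apply_add (hσ : σ ≠ 1) (z x : F) (u : K) :
    Algebra.trace K F (z * (algebraMap K F u + x) -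
        (algebraMap K F u + x) ^ 2 * σ (algebraMap K F u + x)) =
      u * (Algebra.trace K F z - Algebra.trace K F x ^ 2) +
        Algebra.trace K F (z * x - x ^ 2 * σ x) := by
  have := charP_of_injective_algebraMap (algebraMap K F).injective 3
  apply (algebraMap K F).injective
  simp only [map_add, map_sub, map_mul, map_pow, AlgEquiv.commutes,
    algebraMap_trace_of_finrank_eq_three hdim hσ, apply_apply_apply_of_finrank_eq_three hdim]
  grind

variable (ht : σ t = t + 1)

include ht

theorem exists_algebraMap_eq_cube_sub_self : ∃ k : K, algebraMap K F k = t ^ 3 - t := by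
  have := charP_of_injective_algebraMap (algebraMap K F).injective 3
  have : FiniteDimensional K F := Module.finite_of_finrank_pos (by omega)
  refine exists_algebraMap_eq_of_apply_eq
    (mem_zpowers_of_finrank_eq_three hdim (ne_one_of_apply_eq_add_one ht)) ?_
  rw [map_sub, map_pow, ht]
  grind

theorem trace_cubicCoord (u v w : K) : Algebra.trace K F (cubicCoord t (u, v, w)) = w := by
  have := charP_of_injective_algebraMap (algebraMap K F).injective 3
  apply (algebraMap K F).injective
  simp only [cubicCoord_apply, map_add, map_sub, map_mul, map_pow, AlgEquiv.commutes, ht, map_one,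
    algebraMap_trace_of_finrank_eq_three hdim (ne_one_of_apply_eq_add_one ht)]
  grind

theorem bijective_cubicCoord : Function.Bijective (cubicCoord (K := K) t) := by
  have : FiniteDimensional K F := Module.finite_of_finrank_pos (by omega)
  have injective : Function.Injective (cubicCoord (K := K) t) := by
    refine (injective_iff_map_eq_zero _).2 fun ⟨u, v, w⟩ h ↦ ?_
    obtain rfl : w = 0 := by simpa [h] using (trace_cubicCoord hdim ht u v w).symm
    have huv : algebraMap K F u + algebraMap K F v * t = 0 := by simpa [cubicCoord_apply] using h
    have hσuv : algebraMap K F u + algebraMap K F v * (t + 1) = 0 := by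
      simpa [ht] using congrArg σ huv
    obtain rfl : v = 0 := by
      apply (algebraMap K F).injective
      rw [map_zero]
      linear_combination hσuv - huv
    simpa using huv
  refine ⟨injective, (LinearMap.injective_iff_surjective_of_finrank_eq_finrank ?_).1 injective⟩
  simp [hdim]

theorem trace_mul_sub_sq_mul_apply_cubicCoord {k : K} (hk : algebraMap K F k = t ^ 3 - t)
    (z₀ z₁ z₂ u v w : K) :
    Algebra.trace K F (cubicCoord t (z₀, z₁, z₂) * cubicCoord t (u, v, w) -
        cubicCoord t (u, v, w) ^ 2 * σ (cubicCoord t (u, v, w))) =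
      u * (z₂ - w ^ 2) + (v ^ 3 + (-w * v ^ 2 + (-w ^ 2 - z₁) * v +
        ((z₀ - z₂) * w + (1 + k) * w ^ 3))) := by
  have := charP_of_injective_algebraMap (algebraMap K F).injective 3
  have hσ := ne_one_of_apply_eq_add_one ht
  have hsplit : cubicCoord t (u, v, w) = algebraMap K F u + cubicCoord t (0, v, w) := by
    simp [cubicCoord, add_sub_assoc]
  rw [hsplit, trace_mul_sub_sq_mul_apply_add hdim hσ, trace_cubicCoord hdim ht,
    trace_cubicCoord hdim ht]
  congr 1
  apply (algebraMap K F).injective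
  simp only [cubicCoord_apply, map_add, map_sub, map_mul, map_pow, map_neg, map_zero,
    AlgEquiv.commutes, ht, map_one, hk, algebraMap_trace_of_finrank_eq_three hdim hσ]
  grind

end CubicCoordinates

section ValueCounting

variable {ι R : Type*} [Fintype ι]

theorem sum_comp_eq_sum_ncard_smul {β M : Type*} [AddCommMonoid M] {S : ι → β}
    {V : Finset β} (hS : ∀ i, S i ∈ V) (f : β → M) :
    ∑ i, f (S i) = ∑ a ∈ V, {i | S i = a}.ncard • f a := by
  classical
  rw [← sum_fiberwise_of_maps_to' fun i _ ↦ hS i]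
  refine sum_congr rfl fun a _ ↦ ?_
  rw [sum_const, Set.ncard_eq_toFinset_card', Set.toFinset_ofPred]

theorem sum_comp_eq_of_four_values [CommRing R] [IsDomain R] [CharZero R] {S : ι → R} {A B : R}
    (hA : A ≠ 0) (hB : B ≠ 0) (hBA : B ≠ A) (hBnegA : B ≠ -A)
    (hS : ∀ i, S i = 0 ∨ S i = B ∨ S i ^ 2 = A ^ 2) (f : R → R) :
    ∑ i, f (S i) = {i | S i = 0}.ncard * f 0 + {i | S i = B}.ncard * f B +
      {i | S i = A}.ncard * f A + {i | S i = -A}.ncard * f (-A) := by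
  classical
  have hvalues (i : ι) : S i ∈ ({0, B, A, -A} : Finset R) := by
    simpa [sq_eq_sq_iff_eq_or_eq_neg] using hS i
  rw [sum_comp_eq_sum_ncard_smul hvalues]
  simp [hA, hA.symm, hB.symm, hBA, hBnegA, self_ne_neg.2 hA, add_assoc]

theorem natCast_sq_ne_of_sq_eq [CommRing R] [CharZero R] {q : ℕ} (h0 : q ≠ 0) (h3 : q ≠ 3)
    {A : R} (hA : A ^ 2 = 3 * (q : R) ^ 3) : (q : R) ^ 2 ≠ A := by
  rintro rfl
  refine h3 (Nat.eq_of_mul_eq_mul_right (pow_pos (Nat.pos_of_ne_zero h0) 3) ?_)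
  have hA' : (q ^ 2) ^ 2 = 3 * q ^ 3 := by exact_mod_cast hA
  linarith

end ValueCounting

section TraceCharacter

/-- The lift `χ ∘ Tr` of an additive character `χ` of `K` to an extension `F` of `K`. -/
noncomputable def traceChar {K R : Type*} (F : Type*) [CommRing K] [CommRing F] [Algebra K F]
    [CommMonoid R] (χ : AddChar K R) : AddChar F R :=
  χ.compAddMonoidHom (Algebra.trace K F).toAddMonoidHom

variable {k K F R : Type*} [Field k] [Field K] [Field F] [Algebra k K] [Algebra K F] [CommMonoid R]

theorem traceChar_apply (χ : AddChar K R) (x : F) :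
    traceChar F χ x = χ (Algebra.trace K F x) :=
  rfl

theorem traceChar_traceChar [Algebra k F] [IsScalarTower k K F] [FiniteDimensional k K]
    [FiniteDimensional K F] (χ : AddChar k R) : traceChar F (traceChar K χ) = traceChar F χ := by
  ext x
  simp only [traceChar_apply, Algebra.trace_trace]

theorem traceChar_ne_one [FiniteDimensional K F] [Algebra.IsSeparable K F] {χ : AddChar K R}
    (hχ : χ ≠ 1) : traceChar F χ ≠ 1 := by
  refine fun h ↦ hχ ?_
  ext a
  obtain ⟨x, rfl⟩ := Algebra.trace_surjective K F a
  simpa [traceChar_apply] using DFunLike.congr_fun h x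

theorem traceChar_pow_card [Fintype K] [Finite F] (χ : AddChar K R) (x : F) :
    traceChar F χ (x ^ Fintype.card K) = traceChar F χ x := by
  rw [traceChar_apply, traceChar_apply,
    ← Algebra.trace_eq_of_algEquiv (FiniteField.frobeniusAlgEquivOfAlgebraic K F) x,
    FiniteField.frobeniusAlgEquivOfAlgebraic_apply]

end TraceCharacter

section CubicWeilSum

variable {K F R : Type*} [Field K] [Field F] [Fintype F] [Algebra K F] [CommRing R]

/-- The Weil sum `∑ x, χ (Tr (z x - x² σ(x)))` of a cyclic extension `F` of `K` with `σ` in its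
Galois group. For `σ x = x ^ q ^ i`, where `K` has `q` elements, this is the Weil sum of the
decimation `q ^ i + 2`. -/
noncomputable def cubicWeilSum (χ : AddChar K R) (σ : Gal(F/K)) (z : F) : R :=
  walshTransform (traceChar F χ) (fun x ↦ x ^ 2 * σ x) z

variable [IsDomain R] {χ : AddChar K R} {σ : Gal(F/K)} {t : F}

theorem sum_cubicWeilSum [Finite K] (hχ : χ ≠ 1) (σ : Gal(F/K)) :
    ∑ z, cubicWeilSum χ σ z = Fintype.card F := by
  simp_rw [cubicWeilSum, sum_walshTransform (AddChar.IsPrimitive.of_ne_one (traceChar_ne_one hχ))]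
  simp

theorem sum_cubicWeilSum_sq [Finite K] (hχ : χ ≠ 1) (σ : Gal(F/K)) :
    ∑ z, cubicWeilSum χ σ z ^ 2 = (Fintype.card F : R) ^ 2 :=
  sum_walshTransform_sq_of_odd (AddChar.IsPrimitive.of_ne_one (traceChar_ne_one hχ)) fun x ↦ by simp

variable [Fintype K] [CharP K 3] (hdim : Module.finrank K F = 3) (hχ : χ ≠ 1)
  (hcube : ∀ v, χ (v ^ 3) = χ v)

include hdim hχ hcube

/- Summing over `u`, which enters linearly, leaves only the `w` with `w² = z₂`; the sum over `v` is
then quadratic, since `χ (v³) = χ v`. -/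
theorem cubicWeilSum_cubicCoord [DecidableEq K] (ht : σ t = t + 1) {k : K}
    (hk : algebraMap K F k = t ^ 3 - t) (z₀ z₁ z₂ : K) :
    cubicWeilSum χ σ (cubicCoord t (z₀, z₁, z₂)) =
      Fintype.card K * ∑ w with w ^ 2 = z₂,
        ∑ v, χ (-w * v ^ 2 + (1 - w ^ 2 - z₁) * v + ((z₀ - z₂) * w + (1 + k) * w ^ 3)) := by
  have split (u v w : K) :
      traceChar F χ (cubicCoord t (z₀, z₁, z₂) * cubicCoord t (u, v, w) -
        cubicCoord t (u, v, w) ^ 2 * σ (cubicCoord t (u, v, w))) = χ (u * (z₂ - w ^ 2)) *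
      χ (-w * v ^ 2 + (1 - w ^ 2 - z₁) * v + ((z₀ - z₂) * w + (1 + k) * w ^ 3)) := by
    rw [traceChar_apply, trace_mul_sub_sq_mul_apply_cubicCoord hdim ht hk,
      AddChar.map_add_eq_mul χ (u * _), AddChar.map_add_eq_mul χ (v ^ 3), hcube,
      ← AddChar.map_add_eq_mul χ v]
    congr 2
    ring
  rw [cubicWeilSum, walshTransform, ← (bijective_cubicCoord hdim ht).sum_comp]
  set Q := fun w v ↦
    χ (-w * v ^ 2 + (1 - w ^ 2 - z₁) * v + ((z₀ - z₂) * w + (1 + k) * w ^ 3)) with hQ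
  calc _ = ∑ u, ∑ v, ∑ w, χ (u * (z₂ - w ^ 2)) * Q w v := by
        simp only [Fintype.sum_prod_type, split, hQ]
    _ = ∑ v, ∑ w, (∑ u, χ (u * (z₂ - w ^ 2))) * Q w v := by
        rw [sum_comm]
        exact sum_congr rfl fun v _ ↦ by rw [sum_comm]; simp only [sum_mul]
    _ = ∑ w, if w ^ 2 = z₂ then Fintype.card K * ∑ v, Q w v else 0 := by
        rw [sum_comm]
        refine sum_congr rfl fun w _ ↦ ?_
        rw [← mul_sum, AddChar.sum_mulShift _ (AddChar.IsPrimitive.of_ne_one hχ)]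
        simp only [sub_eq_zero, eq_comm (a := z₂), ite_mul, zero_mul, Nat.cast_ite, Nat.cast_zero]
    _ = _ := by rw [mul_sum, sum_filter]

theorem cubicWeilSum_cubicCoord_zero [DecidableEq K] (ht : σ t = t + 1) (z₀ z₁ : K) :
    cubicWeilSum χ σ (cubicCoord t (z₀, z₁, 0)) =
      if z₁ = 1 then (Fintype.card K : R) ^ 2 else 0 := by
  obtain ⟨k, hk⟩ := exists_algebraMap_eq_cube_sub_self hdim ht
  have hroots : ({w | w ^ 2 = 0} : Finset K) = {0} := by ext; simp
  have hlinear := AddChar.sum_mulShift (1 - z₁) (AddChar.IsPrimitive.of_ne_one hχ)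
  rw [cubicWeilSum_cubicCoord hdim hχ hcube ht hk, hroots, sum_singleton]
  simp_rw [mul_comm _ (1 - z₁)] at hlinear
  simp [hlinear, sub_eq_zero, eq_comm (a := (1 : K)), sq]

variable [CharZero R] (hneg : ¬IsSquare (-1 : K))

include hneg

theorem cubicWeilSum_cubicCoord_eq_zero_or (ht : σ t = t + 1) (z₀ z₁ : K) {z₂ : K}
    (hz₂ : z₂ ≠ 0) :
    cubicWeilSum χ σ (cubicCoord t (z₀, z₁, z₂)) = 0 ∨
      cubicWeilSum χ σ (cubicCoord t (z₀, z₁, z₂)) ^ 2 = 3 * (Fintype.card K : R) ^ 3 := by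
  classical
  obtain ⟨k, hk⟩ := exists_algebraMap_eq_cube_sub_self hdim ht
  rw [cubicWeilSum_cubicCoord hdim hχ hcube ht hk]
  by_cases hsquare : IsSquare z₂
  · obtain ⟨s, rfl⟩ := hsquare
    have hs : s ≠ 0 := by simpa using hz₂
    have hs_neg : s ≠ -s := fun h ↦ hs <| by
      linear_combination (s : K) * CharP.ofNat_eq_zero K 3 - h
    have hroots : ({w | w ^ 2 = s * s} : Finset K) = {s, -s} := by
      ext w
      simp [← sq, sq_eq_sq_iff_eq_or_eq_neg]
    rw [hroots, sum_pair hs_neg]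
    set b := 1 - s ^ 2 - z₁ with hb
    set c := (z₀ - s * s) * s + (1 + k) * s ^ 3 with hc
    have hreflect : ∑ v, χ (-(-s) * v ^ 2 + (1 - (-s) ^ 2 - z₁) * v +
        ((z₀ - s * s) * -s + (1 + k) * (-s) ^ 3)) = ∑ v, χ (-(-s * v ^ 2 + b * v + c)) := by
      refine Fintype.sum_equiv (Equiv.neg K) _ _ fun v ↦ congrArg χ ?_
      rw [Equiv.neg_apply, hb, hc]
      ring
    rw [hreflect]
    rcases sum_addChar_quadratic_add_sum_neg hneg (AddChar.IsPrimitive.of_ne_one hχ)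
      (neg_ne_zero.2 hs) b c with h | h
    · left
      rw [h, mul_zero]
    · right
      rw [mul_pow, h]
      ring
  · left
    have hroots : ({w | w ^ 2 = z₂} : Finset K) = ∅ :=
      filter_eq_empty_iff.2 fun w _ h ↦ hsquare ⟨w, by rw [← h, sq]⟩
    simp [hroots]

theorem cubicWeilSum_eq_zero_or_eq_card_sq_or_sq_eq (hσ : σ ≠ 1) (z : F) :
    cubicWeilSum χ σ z = 0 ∨ cubicWeilSum χ σ z = (Fintype.card K : R) ^ 2 ∨
      cubicWeilSum χ σ z ^ 2 = 3 * (Fintype.card K : R) ^ 3 := by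
  classical
  obtain ⟨t, ht⟩ := exists_apply_eq_add_one hdim hσ
  obtain ⟨⟨z₀, z₁, z₂⟩, rfl⟩ := (bijective_cubicCoord hdim ht).surjective z
  rcases eq_or_ne z₂ 0 with rfl | hz₂
  · rw [cubicWeilSum_cubicCoord_zero hdim hχ hcube ht]
    split_ifs <;> simp
  · have h := cubicWeilSum_cubicCoord_eq_zero_or hdim hχ hcube hneg ht z₀ z₁ hz₂
    exact h.imp_right .inr

variable (hq : Fintype.card K ≠ 3)

include hq

theorem cubicWeilSum_cubicCoord_eq_card_sq_iff (ht : σ t = t + 1) (z₀ z₁ z₂ : K) :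
    cubicWeilSum χ σ (cubicCoord t (z₀, z₁, z₂)) = (Fintype.card K : R) ^ 2 ↔
      z₁ = 1 ∧ z₂ = 0 := by
  classical
  have hcard : (Fintype.card K : R) ^ 2 ≠ 0 := by simp
  rcases eq_or_ne z₂ 0 with rfl | hz₂
  · rw [cubicWeilSum_cubicCoord_zero hdim hχ hcube ht]
    split_ifs with h <;> simp [h, hcard.symm]
  · refine iff_of_false (fun h ↦ ?_) fun h ↦ hz₂ h.2
    rcases cubicWeilSum_cubicCoord_eq_zero_or hdim hχ hcube hneg ht z₀ z₁ hz₂ with h' | h'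
    · exact hcard (h.symm.trans h')
    · exact natCast_sq_ne_of_sq_eq Fintype.card_ne_zero hq h' h.symm

theorem ncard_cubicWeilSum_eq_card_sq (hσ : σ ≠ 1) :
    {z | cubicWeilSum χ σ z = (Fintype.card K : R) ^ 2}.ncard = Fintype.card K := by
  obtain ⟨t, ht⟩ := exists_apply_eq_add_one hdim hσ
  have hbij := bijective_cubicCoord hdim ht
  have hset : {z | cubicWeilSum χ σ z = (Fintype.card K : R) ^ 2} =
      Set.range fun u : K ↦ cubicCoord t (u, (1 : K), (0 : K)) := by
    ext z
    obtain ⟨⟨z₀, z₁, z₂⟩, rfl⟩ := hbij.surjective z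
    simp [cubicWeilSum_cubicCoord_eq_card_sq_iff hdim hχ hcube hneg hq ht, hbij.injective.eq_iff,
      eq_comm]
  have hinj : Function.Injective fun u : K ↦ cubicCoord t (u, (1 : K), (0 : K)) :=
    fun u v h ↦ congrArg Prod.fst (hbij.injective h)
  rw [hset, Set.ncard_range_of_injective hinj, Nat.card_eq_fintype_card]

theorem sum_comp_cubicWeilSum (hσ : σ ≠ 1) {A : R} (hA : A ^ 2 = 3 * (Fintype.card K : R) ^ 3)
    (f : R → R) :
    ∑ z, f (cubicWeilSum χ σ z) =
      {z | cubicWeilSum χ σ z = 0}.ncard * f 0 + Fintype.card K * f (Fintype.card K ^ 2) +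
        {z | cubicWeilSum χ σ z = A}.ncard * f A +
        {z | cubicWeilSum χ σ z = -A}.ncard * f (-A) := by
  have hvalues := cubicWeilSum_eq_zero_or_eq_card_sq_or_sq_eq hdim hχ hcube hneg hσ
  rw [← hA] at hvalues
  have hA0 : A ≠ 0 := fun h ↦ by simp [h] at hA
  have hBA {A : R} := natCast_sq_ne_of_sq_eq (A := A) Fintype.card_ne_zero hq
  rw [sum_comp_eq_of_four_values hA0 (by simp) (hBA hA) (hBA ((neg_sq A).trans hA)) hvalues,
    ncard_cubicWeilSum_eq_card_sq hdim hχ hcube hneg hq hσ]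

theorem cubicWeilSum_distribution (hσ : σ ≠ 1) {A : R} (hA : A ^ 2 = 3 * (Fintype.card K : R) ^ 3) :
    3 * {z | cubicWeilSum χ σ z = 0}.ncard + 3 * Fintype.card K =
        2 * Fintype.card K ^ 3 + Fintype.card K ^ 2 ∧
      {z | cubicWeilSum χ σ z = (Fintype.card K : R) ^ 2}.ncard = Fintype.card K ∧
      6 * {z | cubicWeilSum χ σ z = A}.ncard + Fintype.card K ^ 2 = Fintype.card K ^ 3 ∧
      6 * {z | cubicWeilSum χ σ z = -A}.ncard + Fintype.card K ^ 2 = Fintype.card K ^ 3 := by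
  have hF : (Fintype.card F : R) = (Fintype.card K : R) ^ 3 := by
    rw [Module.card_eq_pow_finrank (K := K), hdim, Nat.cast_pow]
  have hq0 : (Fintype.card K : R) ≠ 0 := Nat.cast_ne_zero.2 Fintype.card_ne_zero
  have hA0 : A ≠ 0 := fun h ↦ by simp [h] at hA
  have moment := sum_comp_cubicWeilSum hdim hχ hcube hneg hq hσ hA
  have zeroth := moment fun _ ↦ 1
  have first := moment id
  have second := moment (· ^ 2)
  simp only [id, sum_cubicWeilSum hχ, sum_cubicWeilSum_sq hχ, hF, sum_const, card_univ,
    nsmul_eq_mul, mul_one, neg_sq, hA] at zeroth first second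
  have balanced : ({z | cubicWeilSum χ σ z = A}.ncard : R) =
      {z | cubicWeilSum χ σ z = -A}.ncard :=
    mul_right_cancel₀ hA0 (by linear_combination -first)
  have hNA : 6 * ({z | cubicWeilSum χ σ z = A}.ncard : R) + (Fintype.card K : R) ^ 2 =
      (Fintype.card K : R) ^ 3 := by
    refine mul_right_cancel₀ (pow_ne_zero 3 hq0) ?_
    linear_combination -second + 3 * Fintype.card K ^ 3 * balanced
  refine ⟨?_, ncard_cubicWeilSum_eq_card_sq hdim hχ hcube hneg hq hσ, by exact_mod_cast hNA,
    by exact_mod_cast balanced ▸ hNA⟩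
  refine Nat.cast_injective (R := R) ?_
  push_cast
  linear_combination -3 * zeroth - hNA + 3 * balanced

end CubicWeilSum

section FiniteFields

theorem exists_algebra_galoisField_finrank_eq (p : ℕ) [Fact p.Prime] {r : ℕ} (m : ℕ) (hr : r ≠ 0)
    (hm : m ≠ 0) :
    ∃ _ : Algebra (GaloisField p r) (GaloisField p (m * r)),
      Module.finrank (GaloisField p r) (GaloisField p (m * r)) = m := by
  have hK : Module.finrank (ZMod p) (GaloisField p r) = r := GaloisField.finrank p hr
  have hF : Module.finrank (ZMod p) (GaloisField p (m * r)) = m * r :=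
    GaloisField.finrank p (mul_ne_zero hm hr)
  obtain ⟨φ⟩ := FiniteField.nonempty_algHom_of_finrank_dvd (F := ZMod p) (K := GaloisField p r)
    (L := GaloisField p (m * r)) (by rw [hK, hF]; exact dvd_mul_left r m)
  let _ := φ.toRingHom.toAlgebra
  have := IsScalarTower.of_algHom φ
  refine ⟨inferInstance, Nat.eq_of_mul_eq_mul_left (Nat.pos_of_ne_zero hr) ?_⟩
  have htower := Module.finrank_mul_finrank (ZMod p) (GaloisField p r) (GaloisField p (m * r))
  rw [hK, hF] at htower
  rw [htower, mul_comm]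

variable {K F : Type*} [Field K] [Field F] [Fintype K] [Finite F] [Algebra K F]

theorem exists_gal_apply_eq_pow_card_pow {i : ℕ} (hi : ¬Module.finrank K F ∣ i) :
    ∃ σ : Gal(F/K), σ ≠ 1 ∧ ∀ x, σ x = x ^ Fintype.card K ^ i := by
  refine ⟨FiniteField.frobeniusAlgEquivOfAlgebraic K F ^ i, fun h ↦ hi ?_, fun x ↦ ?_⟩
  · rw [← FiniteField.orderOf_frobeniusAlgEquivOfAlgebraic]
    exact orderOf_dvd_of_pow_eq_one h
  · rw [AlgEquiv.coe_pow, FiniteField.coe_frobeniusAlgEquivOfAlgebraic_iterate]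

theorem not_isSquare_neg_one_of_card_eq_three_pow {r : ℕ} (hr : Odd r)
    (hcard : Fintype.card K = 3 ^ r) : ¬IsSquare (-1 : K) := by
  obtain ⟨j, rfl⟩ := hr
  rw [FiniteField.isSquare_neg_one_iff, hcard, pow_succ, pow_mul, Nat.mul_mod, Nat.pow_mod]
  simp

end FiniteFields

section TernaryWeilSum

variable {r n d : ℕ} {K : Type*} [Field K] [Algebra (ZMod 3) K] [Algebra K (GaloisField 3 n)]

theorem ternaryWeilSum_eq_walshTransform (z : GaloisField 3 n) :
    ternaryWeilSum n d z =
      walshTransform (traceChar (GaloisField 3 n) (ZMod.stdAddChar (N := 3))) (· ^ d) z := by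
  refine sum_congr rfl fun x _ ↦ ?_
  rw [traceChar_apply, ZMod.stdAddChar_apply, ZMod.toCircle_apply, ← Complex.exp_nat_mul]
  congr 1
  push_cast
  ring

theorem ternaryWeilSum_eq_cubicWeilSum [Finite K] {e : ℕ} {σ : Gal(GaloisField 3 n/K)}
    (hσ : ∀ x, σ x = x ^ e) (z : GaloisField 3 n) :
    ternaryWeilSum n (e + 2) z = cubicWeilSum (traceChar K (ZMod.stdAddChar (N := 3))) σ z := by
  have : IsScalarTower (ZMod 3) K (GaloisField 3 n) :=
    IsScalarTower.of_algebraMap_eq' (Subsingleton.elim _ _)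
  rw [ternaryWeilSum_eq_walshTransform, cubicWeilSum, traceChar_traceChar]
  simp_rw [hσ, ← pow_add, add_comm]

theorem exists_gal_ternaryWeilSum_eq_cubicWeilSum {i : ℕ} (hr : r ≠ 0) (hi : ¬3 ∣ i) :
    ∃ (_ : Algebra (GaloisField 3 r) (GaloisField 3 (3 * r)))
      (σ : Gal(GaloisField 3 (3 * r)/GaloisField 3 r)),
      Module.finrank (GaloisField 3 r) (GaloisField 3 (3 * r)) = 3 ∧ σ ≠ 1 ∧
      ∀ z, ternaryWeilSum (3 * r) ((3 ^ r) ^ i + 2) z =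
        cubicWeilSum (traceChar (GaloisField 3 r) (ZMod.stdAddChar (N := 3))) σ z := by
  obtain ⟨_, hdim⟩ := exists_algebra_galoisField_finrank_eq 3 3 hr three_ne_zero
  obtain ⟨σ, hσ_ne_one, hσ⟩ := exists_gal_apply_eq_pow_card_pow (K := GaloisField 3 r)
    (F := GaloisField 3 (3 * r)) (by rwa [hdim])
  rw [← Nat.card_eq_fintype_card, GaloisField.card 3 r hr] at hσ
  exact ⟨_, σ, hdim, hσ_ne_one, ternaryWeilSum_eq_cubicWeilSum hσ⟩

theorem ternaryWeilSum_distribution (hr : 3 ≤ r) (hro : Odd r)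
    (hd : d = 3 ^ r + 2 ∨ d = 3 ^ (2 * r) + 2) :
    3 * {z | ternaryWeilSum (3 * r) d z = 0}.ncard + 3 * 3 ^ r = 2 * 3 ^ (3 * r) + 3 ^ (2 * r) ∧
      {z | ternaryWeilSum (3 * r) d z = 3 ^ (2 * r)}.ncard = 3 ^ r ∧
      6 * {z | ternaryWeilSum (3 * r) d z = 3 ^ ((3 * r + 1) / 2)}.ncard + 3 ^ (2 * r) =
        3 ^ (3 * r) ∧
      6 * {z | ternaryWeilSum (3 * r) d z = -3 ^ ((3 * r + 1) / 2)}.ncard + 3 ^ (2 * r) =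
        3 ^ (3 * r) := by
  obtain ⟨i, hi, rfl⟩ : ∃ i, ¬3 ∣ i ∧ d = (3 ^ r) ^ i + 2 := by
    rcases hd with rfl | rfl
    · exact ⟨1, by norm_num, by ring⟩
    · exact ⟨2, by norm_num, by ring⟩
  obtain ⟨_, σ, hdim, hσ, hweil⟩ :=
    exists_gal_ternaryWeilSum_eq_cubicWeilSum (r := r) (by omega) hi
  have hcard : Fintype.card (GaloisField 3 r) = 3 ^ r := by
    rw [← Nat.card_eq_fintype_card, GaloisField.card 3 r (by omega)]
  have hcard_ne : Fintype.card (GaloisField 3 r) ≠ 3 := by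
    rw [hcard]
    exact (Nat.pow_lt_pow_right (m := 1) (by norm_num) (by omega)).ne'
  have hstd : ZMod.stdAddChar (N := 3) ≠ 1 := by
    simpa using ZMod.isPrimitive_stdAddChar 3 one_ne_zero
  have hcube (v : GaloisField 3 r) := traceChar_pow_card (ZMod.stdAddChar (N := 3)) v
  rw [ZMod.card] at hcube
  have hexp : (3 * r + 1) / 2 * 2 = r * 3 + 1 := by
    obtain ⟨j, rfl⟩ := hro
    omega
  have hA : ((3 : ℂ) ^ ((3 * r + 1) / 2)) ^ 2 = 3 * (Fintype.card (GaloisField 3 r) : ℂ) ^ 3 := by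
    rw [hcard, ← pow_mul, hexp, pow_succ', pow_mul, Nat.cast_pow, Nat.cast_ofNat]
  have hneg := not_isSquare_neg_one_of_card_eq_three_pow hro hcard
  simp_rw [hweil]
  simpa [hcard, ← pow_mul, mul_comm r] using
    cubicWeilSum_distribution hdim (traceChar_ne_one hstd) hcube hneg hcard_ne hσ hA

end TernaryWeilSum

theorem ternary_cross_correlation_distribution_odd_general (r : ℕ) (hr : 3 ≤ r) (hro : Odd r)
    (n d : ℕ) (hn : n = 3 * r) (hd : d = 3 ^ r + 2 ∨ d = 3 ^ (2 * r) + 2) :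
    Set.ncard {z : GaloisField 3 n | ternaryWeilSum n d z = 0}
        = 2 * 3 ^ (3 * r - 1) + 3 ^ (2 * r - 1) - 3 ^ r ∧
    Set.ncard {z : GaloisField 3 n | ternaryWeilSum n d z = 3 ^ (2 * r)} = 3 ^ r ∧
    Set.ncard {z : GaloisField 3 n | ternaryWeilSum n d z = 3 ^ ((3 * r + 1) / 2)}
        = (3 ^ (3 * r - 1) - 3 ^ (2 * r - 1)) / 2 ∧
    Set.ncard {z : GaloisField 3 n | ternaryWeilSum n d z = -3 ^ ((3 * r + 1) / 2)}
        = (3 ^ (3 * r - 1) - 3 ^ (2 * r - 1)) / 2 := by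
  subst hn
  have hsq : 3 * 3 ^ (2 * r - 1) = 3 ^ (2 * r) := mul_pow_sub_one (by omega) 3
  have hcube : 3 * 3 ^ (3 * r - 1) = 3 ^ (3 * r) := mul_pow_sub_one (by omega) 3
  obtain ⟨h0, hB, hA, hnegA⟩ := ternaryWeilSum_distribution hr hro hd
  exact ⟨by omega, hB, by omega, by omega⟩

/-- For odd `r ≥ 3` with `gcd(r,3) = 1`, `n = 3r` and `d = 3^r + 2` or
`d = 3^(2r) + 2`, the value distribution of the Weil sum `S_d(z)`,
`z` ranging over `GF(3^n)`. -/
theorem ternary_cross_correlation_distribution_odd (r : ℕ) (hr : 3 ≤ r) (hro : Odd r)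
    (h3 : Nat.gcd r 3 = 1) (n d : ℕ) (hn : n = 3 * r)
    (hd : d = 3 ^ r + 2 ∨ d = 3 ^ (2 * r) + 2) :
    Set.ncard {z : GaloisField 3 n | ternaryWeilSum n d z = 0}
        = 2 * 3 ^ (3 * r - 1) + 3 ^ (2 * r - 1) - 3 ^ r ∧
    Set.ncard {z : GaloisField 3 n | ternaryWeilSum n d z = 3 ^ (2 * r)} = 3 ^ r ∧
    Set.ncard {z : GaloisField 3 n | ternaryWeilSum n d z = 3 ^ ((3 * r + 1) / 2)}
        = (3 ^ (3 * r - 1) - 3 ^ (2 * r - 1)) / 2 ∧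
    Set.ncard {z : GaloisField 3 n | ternaryWeilSum n d z = -3 ^ ((3 * r + 1) / 2)}
        = (3 ^ (3 * r - 1) - 3 ^ (2 * r - 1)) / 2 :=
  ternary_cross_correlation_distribution_odd_general r hr hro n d hn hd
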